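/- Let λ > 0 and q₋ < x₀ < 0 < q₊. Define F_ε = {x₀ + ε·B(1/(2λ)) > 0} and θ_ε = inf{t ≥ 0 : X_ε(t) = q₊} (finite almost surely on F_ε). Then, as ε → 0⁺, the conditional law Law[θ_ε − (2/λ)·ln(1/ε) | F_ε] converges weakly to the law of (1/λ)·ln(2λ·q₊·|x₀|) + (1/λ)·Z, where Z is a standard Gumbel random variable. -/

import Mathlib

open MeasureTheory ProbabilityTheory Filter Topology Set

/-- `B` is a standard Brownian motion (for times `t ≥ 0`) on the probability space `(Ω, P)`. -/
def IsBrownianMotion {Ω : Type*} [MeasurableSpace Ω] (P : Measure Ω) (B : ℝ → Ω → ℝ) : Prop :=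
  (∀ t : ℝ, Measurable (B t)) ∧
  (∀ᵐ ω ∂P, B 0 ω = 0 ∧ ContinuousOn (fun t => B t ω) (Set.Ici (0 : ℝ))) ∧
  (∀ s t : ℝ, 0 ≤ s → s ≤ t →
    Measure.map (fun ω => B t ω - B s ω) P = gaussianReal 0 (Real.toNNReal (t - s))) ∧
  (∀ t : ℕ → ℝ, Monotone t → (∀ i, 0 ≤ t i) →
    iIndepFun (fun i ω => B (t (i + 1)) ω - B (t i) ω) P)

/-!
Once `X_ε` has reached `q₊` it is unlikely to come back, so up to a factor `1 + o(1)` the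
probability of `{θ_ε ≤ t} ∩ F_ε` is that of `{X_ε(t) ≥ q₊}`. This is an Ottaviani-type maximal
inequality for the Brownian motion `B` and the barrier `(-x₀ + q₊ e^{-λr}) / ε` at Brownian time
`(1 - e^{-2λr}) / (2λ)`: what `B` has left to do after time `r` is of order `e^{-λr}`, which is
small compared with the distance `q₊ e^{-λr} / ε` from the barrier to `-x₀ / ε`. Conditionally on
`F_ε` the distribution function of `θ_ε` is thus asymptotically a ratio of two Gaussian tails. At
`t = y + (2/λ) log (1/ε)` their levels `a_ε < b_ε` satisfy `a_ε → ∞` and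
`a_ε (b_ε - a_ε) → 2λ q₊ |x₀| e^{-λy}`, so the ratio tends to `exp (-2λ q₊ |x₀| e^{-λy})`, which is
the distribution function of the shifted and scaled Gumbel variable.
-/

section ConvergenceInDistribution

lemma tendsto_probabilityMeasure_of_tendsto_measureReal_Iic {ι : Type*} {l : Filter ι}
    [l.IsCountablyGenerated] {μ : ι → ProbabilityMeasure ℝ} {ν : ProbabilityMeasure ℝ}
    (h : ∀ x, (ν : Measure ℝ) {x} = 0 →
      Tendsto (fun i => (μ i : Measure ℝ).real (Iic x)) l (𝓝 ((ν : Measure ℝ).real (Iic x)))) :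
    Tendsto μ l (𝓝 ν) := by
  have dense_nonatoms : Dense {x | (ν : Measure ℝ) {x} = 0} := by
    have atoms_countable : {x | 0 < (ν : Measure ℝ) {x}}.Countable :=
      Measure.countable_meas_level_set_pos measurable_id
    simpa only [compl_ofPred, pos_iff_ne_zero, not_not] using atoms_countable.dense_compl ℝ
  refine (isPiSystem_Ioc_mem _ _).tendsto_probabilityMeasure_of_tendsto_of_mem
    (S := {s | ∃ᵉ (a ∈ {x | (ν : Measure ℝ) {x} = 0}) (b ∈ {x | (ν : Measure ℝ) {x} = 0}),
      a < b ∧ Ioc a b = s}) ?_ ?_ ?_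
  · rintro _ ⟨a, -, b, -, -, rfl⟩
    exact measurableSet_Ioc
  · intro u hu x hx
    obtain ⟨l', r', ⟨hl, hr⟩, hsub⟩ := mem_nhds_iff_exists_Ioo_subset.1 (hu.mem_nhds hx)
    obtain ⟨a, ha, hla, hax⟩ := dense_nonatoms.exists_between hl
    obtain ⟨b, hb, hxb, hbr⟩ := dense_nonatoms.exists_between hr
    exact ⟨Ioc a b, ⟨a, ha, b, hb, hax.trans hxb, rfl⟩, Ioc_mem_nhds hax hxb,
      (Ioc_subset_Ioo_right hbr).trans ((Ioo_subset_Ioo_left hla.le).trans hsub)⟩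
  · rintro _ ⟨a, ha, b, hb, hab, rfl⟩
    have real_Ioc (m : ProbabilityMeasure ℝ) : ((m (Ioc a b) : NNReal) : ℝ)
        = (m : Measure ℝ).real (Iic b) - (m : Measure ℝ).real (Iic a) := by
      rw [← measureReal_sdiff (Iic_subset_Iic.2 hab.le) measurableSet_Iic, Iic_sdiff_Iic]
      rfl
    rw [← NNReal.tendsto_coe]
    simpa only [real_Ioc] using (h b hb).sub (h a ha)

lemma tendstoInDistribution_of_tendsto_measureReal_le {ι Ω' : Type*} {Ω : ι → Type*}
    {l : Filter ι} [l.IsCountablyGenerated] {_ : ∀ i, MeasurableSpace (Ω i)}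
    {_ : MeasurableSpace Ω'} {μ : ∀ i, Measure (Ω i)} [∀ i, IsProbabilityMeasure (μ i)]
    {μ' : Measure Ω'} [IsProbabilityMeasure μ'] {X : ∀ i, Ω i → ℝ} {Z : Ω' → ℝ}
    (hX : ∀ i, AEMeasurable (X i) (μ i)) (hZ : AEMeasurable Z μ')
    (h : ∀ x, μ' {ω | Z ω = x} = 0 →
      Tendsto (fun i => (μ i).real {ω | X i ω ≤ x}) l (𝓝 (μ'.real {ω | Z ω ≤ x}))) :
    TendstoInDistribution X l Z μ μ' where
  forall_aemeasurable := hX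
  aemeasurable_limit := hZ
  tendsto := by
    refine tendsto_probabilityMeasure_of_tendsto_measureReal_Iic fun x hx => ?_
    simp only [ProbabilityMeasure.coe_mk,
      Measure.map_apply_of_aemeasurable hZ (measurableSet_singleton x)] at hx
    simpa only [ProbabilityMeasure.coe_mk,
      map_measureReal_apply_of_aemeasurable (hX _) measurableSet_Iic,
      map_measureReal_apply_of_aemeasurable hZ measurableSet_Iic] using! h x hx

lemma tendsto_integral_of_tendstoInDistribution {ι Ω' E : Type*} {Ω : ι → Type*} {l : Filter ι}
    {_ : ∀ i, MeasurableSpace (Ω i)} {_ : MeasurableSpace Ω'} [TopologicalSpace E]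
    [MeasurableSpace E] [OpensMeasurableSpace E] {μ : ∀ i, Measure (Ω i)}
    [∀ i, IsProbabilityMeasure (μ i)] {μ' : Measure Ω'} [IsProbabilityMeasure μ']
    {X : ∀ i, Ω i → E} {Z : Ω' → E} (h : TendstoInDistribution X l Z μ μ')
    (f : BoundedContinuousFunction E ℝ) :
    Tendsto (fun i => ∫ ω, f (X i ω) ∂μ i) l (𝓝 (∫ ω, f (Z ω) ∂μ')) := by
  have := ProbabilityMeasure.tendsto_iff_forall_integral_tendsto.1 h.tendsto f
  simpa only [ProbabilityMeasure.coe_mk,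
    integral_map (h.forall_aemeasurable _) f.continuous.measurable.aestronglyMeasurable,
    integral_map h.aemeasurable_limit f.continuous.measurable.aestronglyMeasurable] using this

end ConvergenceInDistribution

section GaussianTail

lemma mul_exp_mul_integral_Ioi_add_div {x : ℝ} (hx : 0 < x) (ρ : ℝ) :
    x * Real.exp (x ^ 2 / 2) * ∫ z in Ioi (x + ρ / x), Real.exp (-z ^ 2 / 2)
      = ∫ w in Ioi (0 : ℝ), Real.exp (-(ρ + w) - ((ρ + w) / x) ^ 2 / 2) := by
  have shift : ∫ z in Ioi (x + ρ / x), Real.exp (-z ^ 2 / 2)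
      = ∫ z in Ioi (0 : ℝ), Real.exp (-(x + ρ / x + z) ^ 2 / 2) := by
    have := (measurePreserving_add_left volume (x + ρ / x)).setIntegral_preimage_emb
      (measurableEmbedding_addLeft _) (fun z => Real.exp (-z ^ 2 / 2)) (Ioi (x + ρ / x))
    simpa only [preimage_const_add_Ioi, sub_self] using this.symm
  have scale := integral_comp_mul_left_Ioi
    (fun z => Real.exp (-(x + ρ / x + z) ^ 2 / 2)) 0 (inv_pos.2 hx)
  rw [mul_zero, inv_inv, smul_eq_mul] at scale
  rw [shift, mul_right_comm, ← scale, ← integral_mul_const]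
  refine integral_congr_ae (ae_of_all _ fun w => ?_)
  simp only [← Real.exp_add]
  congr 1
  field_simp
  ring

lemma tendsto_mul_exp_mul_integral_Ioi_add_div {ι : Type*} {l : Filter ι}
    [l.IsCountablyGenerated] {x ρ : ι → ℝ} {r : ℝ} (hx : Tendsto x l atTop)
    (hρ : Tendsto ρ l (𝓝 r)) :
    Tendsto (fun i => x i * Real.exp (x i ^ 2 / 2) *
      ∫ z in Ioi (x i + ρ i / x i), Real.exp (-z ^ 2 / 2)) l (𝓝 (Real.exp (-r))) := by
  have dominated : Tendsto
      (fun i => ∫ w in Ioi (0 : ℝ), Real.exp (-(ρ i + w) - ((ρ i + w) / x i) ^ 2 / 2)) l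
      (𝓝 (∫ w in Ioi (0 : ℝ), Real.exp (-(r + w)))) := by
    refine tendsto_integral_filter_of_dominated_convergence
      (fun w => Real.exp (1 - r) * Real.exp (-w)) (Eventually.of_forall fun i => by fun_prop) ?_
      ((integrableOn_exp_neg_Ioi 0).const_mul _) (ae_of_all _ fun w => ?_)
    · filter_upwards [hρ.eventually_const_lt (sub_one_lt r)] with i hi
      refine ae_of_all _ fun w => ?_
      rw [Real.norm_eq_abs, Real.abs_exp, ← Real.exp_add, Real.exp_le_exp]
      linarith [sq_nonneg ((ρ i + w) / x i)]
    · have hquot := (hρ.add_const w).div_atTop hx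
      simpa using ((hρ.add_const w).neg.sub ((hquot.pow 2).div_const 2)).rexp
  have limit_value : ∫ w in Ioi (0 : ℝ), Real.exp (-(r + w)) = Real.exp (-r) := by
    simp only [neg_add, Real.exp_add, integral_const_mul, integral_exp_neg_Ioi_zero, mul_one]
  rw [limit_value] at dominated
  refine dominated.congr' ?_
  filter_upwards [hx.eventually_gt_atTop 0] with i hi
  exact (mul_exp_mul_integral_Ioi_add_div hi (ρ i)).symm

lemma gaussianReal_real_Ici (x : ℝ) :
    (gaussianReal 0 1).real (Ici x)
      = (√(2 * Real.pi))⁻¹ * ∫ z in Ioi x, Real.exp (-z ^ 2 / 2) := by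
  rw [Measure.real, gaussianReal_apply_eq_integral 0 one_ne_zero, ENNReal.toReal_ofReal
    (integral_nonneg fun z => gaussianPDFReal_nonneg 0 1 z), integral_Ici_eq_integral_Ioi,
    ← integral_const_mul]
  simp [gaussianPDFReal]

-- Both tails are compared with `exp (-x ^ 2 / 2) / x`, so no lower bound on a tail is needed.
lemma tendsto_gaussianReal_real_Ici_div {ι : Type*} {l : Filter ι} [l.IsCountablyGenerated]
    {x y : ι → ℝ} {r : ℝ} (hx : Tendsto x l atTop)
    (hxy : Tendsto (fun i => x i * (y i - x i)) l (𝓝 r)) :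
    Tendsto (fun i => (gaussianReal 0 1).real (Ici (y i)) / (gaussianReal 0 1).real (Ici (x i)))
      l (𝓝 (Real.exp (-r))) := by
  have tail_y := tendsto_mul_exp_mul_integral_Ioi_add_div hx hxy
  have tail_x := tendsto_mul_exp_mul_integral_Ioi_add_div hx (tendsto_const_nhds (x := (0 : ℝ)))
  rw [neg_zero, Real.exp_zero] at tail_x
  have ratio := tail_y.div tail_x one_ne_zero
  rw [div_one] at ratio
  refine ratio.congr' ?_
  filter_upwards [hx.eventually_gt_atTop 0] with i hi
  rw [Pi.div_apply, gaussianReal_real_Ici, gaussianReal_real_Ici, mul_div_cancel_left₀ _ hi.ne',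
    zero_div, add_zero, add_sub_cancel, mul_div_mul_left _ _ (by positivity),
    mul_div_mul_left _ _ (by positivity)]

lemma gaussianReal_real_Ici_pos (x : ℝ) : 0 < (gaussianReal 0 1).real (Ici x) := by
  refine measureReal_nonneg.lt_of_ne' fun h => ?_
  have := gaussianReal_absolutelyContinuous' 0 one_ne_zero
    ((measureReal_eq_zero_iff (by finiteness)).1 h)
  simp at this

lemma gaussianReal_real_Iic_neg_le (v : NNReal) {c : ℝ} (hc : 0 < c) :
    (gaussianReal 0 v).real (Iic (-c)) ≤ v / c ^ 2 := by
  have chebyshev := meas_ge_le_variance_div_sq (memLp_id_gaussianReal (μ := 0) (v := v) 2) hc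
  rw [variance_id_gaussianReal] at chebyshev
  refine ENNReal.toReal_le_of_le_ofReal (by positivity) (le_trans (measure_mono ?_) chebyshev)
  intro z hz
  rw [mem_Iic] at hz
  simp only [id, integral_id_gaussianReal, sub_zero, mem_ofPred_eq]
  exact le_abs.2 (.inr (le_neg_of_le_neg hz))

end GaussianTail

section MaximalInequality

variable {Ω : Type*}

lemma measurableSet_disjointed {m : MeasurableSpace Ω} {E : ℕ → Set Ω} {k : ℕ}
    (hE : ∀ j ≤ k, MeasurableSet (E j)) : MeasurableSet (disjointed E k) := by
  rw [disjointed_apply, Finset.sup_set_eq_biUnion]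
  exact (hE k le_rfl).diff <|
    Finset.measurableSet_biUnion _ fun j hj => hE j (Finset.mem_Iio.1 hj).le

lemma measurable_iSup_comap_sum {ι : Type*} (ξ : ι → Ω → ℝ) (s : Finset ι) :
    Measurable[⨆ i ∈ (s : Set ι), MeasurableSpace.comap (ξ i) inferInstance]
      fun ω => ∑ i ∈ s, ξ i ω :=
  Finset.measurable_fun_sum s fun i hi =>
    (comap_measurable (ξ i)).mono (le_iSup₂_of_le i (Finset.mem_coe.2 hi) le_rfl) le_rfl

variable [MeasurableSpace Ω] {P : Measure Ω}

lemma mul_measureReal_biUnion_le_of_disjointed [IsFiniteMeasure P] {E R : ℕ → Set Ω} {D : Set Ω}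
    {n : ℕ} {p : ℝ} (hE : ∀ k, MeasurableSet (E k)) (hR : ∀ k, MeasurableSet (R k))
    (hp : ∀ k ≤ n, p * P.real (disjointed E k) ≤ P.real (disjointed E k ∩ R k))
    (hD : ∀ k ≤ n, E k ∩ R k ⊆ D) :
    p * P.real (⋃ k ∈ Finset.range (n + 1), E k) ≤ P.real D := by
  have le_of_mem {k : ℕ} (hk : k ∈ Finset.range (n + 1)) : k ≤ n := Finset.mem_range_succ_iff.1 hk
  have disjoint {i j : ℕ} (hij : i ≠ j) : Disjoint (disjointed E i) (disjointed E j) :=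
    disjoint_disjointed E hij
  have first_meas (k : ℕ) : MeasurableSet (disjointed E k) := .disjointed hE k
  calc p * P.real (⋃ k ∈ Finset.range (n + 1), E k)
      = ∑ k ∈ Finset.range (n + 1), p * P.real (disjointed E k) := by
        rw [← Finset.mul_sum, ← measureReal_biUnion_finset (fun _ _ _ _ hij => disjoint hij)
          fun k _ => first_meas k, biUnion_range_succ_disjointed, partialSups_eq_sup_range,
          Finset.sup_set_eq_biUnion]
    _ ≤ ∑ k ∈ Finset.range (n + 1), P.real (disjointed E k ∩ R k) :=
        Finset.sum_le_sum fun k hk => hp k (le_of_mem hk)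
    _ = P.real (⋃ k ∈ Finset.range (n + 1), disjointed E k ∩ R k) :=
        (measureReal_biUnion_finset (fun _ _ _ _ hij => (disjoint hij).mono inter_subset_left
          inter_subset_left) fun k _ => (first_meas k).inter (hR k)).symm
    _ ≤ P.real D := measureReal_mono <| iUnion₂_subset fun k hk =>
        (inter_subset_inter_left _ (disjointed_subset E k)).trans (hD k (le_of_mem hk))

/-- Ottaviani's maximal inequality for the moving barrier `c`: after the first `k` at which the sums
reach `c k`, the remaining increments are independent of the past. -/
lemma mul_measureReal_exists_le_sum_le {ξ : ℕ → Ω → ℝ} (hξ : iIndepFun ξ P)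
    (hm : ∀ i, Measurable (ξ i)) {n : ℕ} {c : ℕ → ℝ} {d p : ℝ}
    (hp : ∀ k ≤ n, p ≤ P.real {ω | d - c k ≤ ∑ i ∈ Finset.Ico k n, ξ i ω}) :
    p * P.real {ω | ∃ k ≤ n, c k ≤ ∑ i ∈ Finset.range k, ξ i ω}
      ≤ P.real {ω | d ≤ ∑ i ∈ Finset.range n, ξ i ω} := by
  have := hξ.isProbabilityMeasure
  let past (k : ℕ) : MeasurableSpace Ω :=
    ⨆ i ∈ (Finset.range k : Set ℕ), MeasurableSpace.comap (ξ i) inferInstance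
  let E (k : ℕ) : Set Ω := {ω | c k ≤ ∑ i ∈ Finset.range k, ξ i ω}
  let R (k : ℕ) : Set Ω := {ω | d - c k ≤ ∑ i ∈ Finset.Ico k n, ξ i ω}
  have first_passage_past (k : ℕ) : MeasurableSet[past k] (disjointed E k) := by
    refine measurableSet_disjointed fun j hj => ?_
    have past_mono : past j ≤ past k := biSup_mono fun i hi => Finset.range_mono hj hi
    exact past_mono _ (measurable_iSup_comap_sum ξ _ measurableSet_Ici)
  have indep (k : ℕ) : P.real (disjointed E k ∩ R k) = P.real (disjointed E k) * P.real (R k) := by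
    have disj : Disjoint (Finset.range k : Set ℕ) (Finset.Ico k n) := by
      rw [Finset.disjoint_coe, Finset.range_eq_Ico]
      exact Finset.Ico_disjoint_Ico_consecutive 0 k n
    have := indep_iSup_of_disjoint (fun i => (hm i).comap_le) hξ disj
    rw [Measure.real, (Indep_iff _ _ P).1 this _ (R k) (first_passage_past k)
      (measurable_iSup_comap_sum ξ _ measurableSet_Ici), ENNReal.toReal_mul]
    rfl
  have union_eq : {ω | ∃ k ≤ n, c k ≤ ∑ i ∈ Finset.range k, ξ i ω}
      = ⋃ k ∈ Finset.range (n + 1), E k := by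
    ext ω
    simp [E]
  rw [union_eq]
  refine mul_measureReal_biUnion_le_of_disjointed (R := R)
    (fun k => measurableSet_le (by fun_prop) (by fun_prop))
    (fun k => measurableSet_le (by fun_prop) (by fun_prop))
    (fun k hk => ?_) (fun k hk ω hω => ?_)
  · rw [indep, mul_comm]
    gcongr
    exact hp k hk
  · have past_ge : c k ≤ _ := hω.1
    have future_ge : d - c k ≤ _ := hω.2
    rw [mem_ofPred_eq, ← Finset.sum_range_add_sum_Ico _ hk]
    linarith

end MaximalInequality

section Paths

lemma measureReal_le_of_forall_of_ae_eventually_mem {Ω : Type*} [MeasurableSpace Ω]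
    {P : Measure Ω} [IsFiniteMeasure P] {A : Set Ω} {G : ℕ → Set Ω} {b : ℝ}
    (hG : ∀ n, P.real (G n) ≤ b) (hA : ∀ᵐ ω ∂P, ω ∈ A → ∀ᶠ n in atTop, ω ∈ G n) :
    P.real A ≤ b := by
  have mono : Monotone fun N => ⋂ n ≥ N, G n := fun M N hMN =>
    biInter_subset_biInter_left fun n hn => le_trans hMN hn
  have eventually_subset : {ω | ∀ᶠ n in atTop, ω ∈ G n} ⊆ ⋃ N, ⋂ n ≥ N, G n := fun ω hω => by
    simpa only [mem_iUnion, mem_iInter] using eventually_atTop.1 hω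
  have real_le (N : ℕ) : P.real (⋂ n ≥ N, G n) ≤ b :=
    (measureReal_mono (biInter_subset_of_mem (le_refl N))).trans (hG N)
  have union_le : P.real (⋃ N, ⋂ n ≥ N, G n) ≤ b :=
    le_of_tendsto' ((ENNReal.tendsto_toReal (measure_ne_top _ _)).comp
      (tendsto_measure_iUnion_atTop mono)) real_le
  refine le_trans (ENNReal.toReal_mono (measure_ne_top _ _) (measure_mono_ae ?_)) union_le
  filter_upwards [hA] with ω hω hωA
  exact eventually_subset (hω hωA)

lemma eventually_exists_grid_pos {g : ℝ → ℝ} {u s : ℝ} (hg : ContinuousOn g (Icc 0 u))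
    (hs : s ∈ Icc 0 u) (hpos : 0 < g s) :
    ∀ᶠ n : ℕ in atTop, ∃ k ≤ n, 0 < g (k / n * u) := by
  have hu : 0 ≤ u := hs.1.trans hs.2
  have ratio_mul : s / u * u = s :=
    div_mul_cancel_of_imp fun h => le_antisymm (h ▸ hs.2) hs.1
  have floor_le (n : ℕ) : ⌊s / u * n⌋₊ ≤ n :=
    Nat.floor_le_of_le <| mul_le_of_le_one_left (Nat.cast_nonneg n) (div_le_one_of_le₀ hs.2 hu)
  have grid_tendsto : Tendsto (fun n : ℕ => (⌊s / u * n⌋₊ : ℝ) / n * u) atTop (𝓝[Icc 0 u] s) := by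
    refine tendsto_nhdsWithin_iff.2 ⟨?_, Eventually.of_forall fun n => ⟨by positivity,
      mul_le_of_le_one_left hu <| div_le_one_of_le₀ (mod_cast floor_le n) (Nat.cast_nonneg n)⟩⟩
    simpa only [Function.comp_def, ratio_mul] using
      ((tendsto_nat_floor_mul_div_atTop (div_nonneg hs.1 hu)).comp
        (tendsto_natCast_atTop_atTop (R := ℝ))).mul_const u
  filter_upwards [((hg s hs).tendsto.comp grid_tendsto).eventually_const_lt hpos] with n hn
  exact ⟨_, floor_le n, hn⟩

lemma exists_le_iff_forall_exists_dense {α : Type*} [TopologicalSpace α] {K D : Set α} {g : α → ℝ}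
    {q : ℝ} (hK : IsCompact K) (hg : ContinuousOn g K) (hDK : D ⊆ K) (hKD : K ⊆ closure D) :
    (∃ r ∈ K, q ≤ g r) ↔ ∀ m : ℕ, ∃ r ∈ D, q - 1 / (m + 1) < g r := by
  constructor
  · rintro ⟨r, hr, hq⟩ m
    have := mem_closure_iff_nhdsWithin_neBot.1 (hKD hr)
    have near : ∀ᶠ r' in 𝓝[D] r, q - 1 / (m + 1) < g r' :=
      ((hg r hr).mono hDK).tendsto.eventually_const_lt
        ((sub_lt_self q Nat.one_div_pos_of_nat).trans_le hq)
    exact (eventually_mem_nhdsWithin.and near).exists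
  · intro h
    obtain ⟨r₀, hr₀, -⟩ := h 0
    obtain ⟨r, hr, hmax⟩ := hK.exists_isMaxOn ⟨r₀, hDK hr₀⟩ hg
    refine ⟨r, hr, le_of_forall_pos_lt_add fun η hη => ?_⟩
    obtain ⟨m, hm⟩ := exists_nat_one_div_lt hη
    obtain ⟨r', hr', hq⟩ := h m
    linarith [isMaxOn_iff.1 hmax r' (hDK hr')]

lemma nullMeasurableSet_exists_le {α Ω : Type*} [PseudoMetricSpace α] [MeasurableSpace Ω]
    {μ : Measure Ω} {K : Set α} (hK : IsCompact K) {Y : α → Ω → ℝ} (hY : ∀ r ∈ K, Measurable (Y r))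
    (hcont : ∀ᵐ ω ∂μ, ContinuousOn (fun r => Y r ω) K) (q : ℝ) :
    NullMeasurableSet {ω | ∃ r ∈ K, q ≤ Y r ω} μ := by
  obtain ⟨D, hDK, hD, hKD⟩ := hK.isSeparable.exists_countable_dense_subset
  have meas : MeasurableSet (⋂ m : ℕ, ⋃ r ∈ D, {ω | q - 1 / (m + 1) < Y r ω}) :=
    .iInter fun m => .biUnion hD fun r hr => measurableSet_lt measurable_const (hY r (hDK hr))
  refine meas.nullMeasurableSet.congr ?_
  filter_upwards [hcont] with ω hω
  refine propext (Iff.trans ?_ (exists_le_iff_forall_exists_dense hK hω hDK hKD).symm)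
  exact mem_iInter.trans (forall_congr' fun m => by simp)

/-- The first time `t ≥ 0` at which the path `x` is at level `q`; it is `0` when `x` never visits
`q`. -/
noncomputable def levelHittingTime (x : ℝ → ℝ) (q : ℝ) : ℝ := sInf {t | 0 ≤ t ∧ x t = q}

lemma levelHittingTime_le_iff {x : ℝ → ℝ} {q t : ℝ} (hx : ContinuousOn x (Ici 0)) (h0 : x 0 ≤ q)
    (hex : ∃ r, 0 ≤ r ∧ q ≤ x r) :
    levelHittingTime x q ≤ t ↔ ∃ r ∈ Icc 0 t, q ≤ x r := by
  have ivt {r : ℝ} (hr : 0 ≤ r) (hq : q ≤ x r) : ∃ s ∈ Icc 0 r, x s = q :=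
    intermediate_value_Icc hr (hx.mono Icc_subset_Ici_self) ⟨h0, hq⟩
  have bdd : BddBelow {r | 0 ≤ r ∧ x r = q} := ⟨0, fun r hr => hr.1⟩
  constructor
  · intro h
    obtain ⟨r, hr, hq⟩ := hex
    obtain ⟨s, hs, hsq⟩ := ivt hr hq
    have closed : IsClosed {r | 0 ≤ r ∧ x r = q} :=
      hx.preimage_isClosed_of_isClosed isClosed_Ici (isClosed_singleton (x := q))
    have attained := closed.csInf_mem ⟨s, hs.1, hsq⟩ bdd
    exact ⟨_, ⟨attained.1, h⟩, attained.2.ge⟩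
  · rintro ⟨r, hr, hq⟩
    obtain ⟨s, hs, hsq⟩ := ivt hr.1 hq
    exact (csInf_le bdd ⟨hs.1, hsq⟩).trans (hs.2.trans hr.2)

end Paths

namespace IsBrownianMotion

variable {Ω : Type*} [MeasurableSpace Ω] {P : Measure Ω} {B : ℝ → Ω → ℝ}

lemma isProbabilityMeasure (hB : IsBrownianMotion P B) : IsProbabilityMeasure P :=
  (hB.2.2.2 0 monotone_const fun _ => le_rfl).isProbabilityMeasure

lemma map_eq (hB : IsBrownianMotion P B) {u : ℝ} (hu : 0 ≤ u) :
    P.map (B u) = gaussianReal 0 u.toNNReal := by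
  have increment_law := hB.2.2.1 0 u le_rfl hu
  rw [sub_zero] at increment_law
  rw [← increment_law]
  refine Measure.map_congr ?_
  filter_upwards [hB.2.1] with ω hω
  rw [hω.1, sub_zero]

lemma measureReal_le (hB : IsBrownianMotion P B) {u : ℝ} (hu : 0 < u) (c : ℝ) :
    P.real {ω | c ≤ B u ω} = (gaussianReal 0 1).real (Ici (c / √u)) := by
  have scaling : (gaussianReal 0 1).map (√u * ·) = gaussianReal 0 u.toNNReal := by
    rw [gaussianReal_map_const_mul, mul_zero, mul_one]
    congr 1
    ext
    simp [Real.sq_sqrt hu.le, hu.le]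
  change P.real (B u ⁻¹' Ici c) = _
  rw [← map_measureReal_apply (hB.1 u) measurableSet_Ici, hB.map_eq hu.le, ← scaling,
    map_measureReal_apply (by fun_prop) measurableSet_Ici]
  congr 1
  ext z
  rw [mem_preimage, mem_Ici, mem_Ici, div_le_iff₀' (Real.sqrt_pos.2 hu)]

lemma measureReal_lt (hB : IsBrownianMotion P B) {u : ℝ} (hu : 0 < u) (c : ℝ) :
    P.real {ω | c < B u ω} = (gaussianReal 0 1).real (Ici (c / √u)) := by
  have := nullSingletonClass_gaussianReal (μ := 0) (Real.toNNReal_pos.2 hu).ne'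
  rw [← hB.measureReal_le hu]
  change P.real (B u ⁻¹' Ioi c) = P.real (B u ⁻¹' Ici c)
  rw [← map_measureReal_apply (hB.1 u) measurableSet_Ioi,
    ← map_measureReal_apply (hB.1 u) measurableSet_Ici, hB.map_eq hu.le]
  exact measureReal_congr Ioi_ae_eq_Ici

lemma one_sub_div_sq_le_measureReal_neg_lt_sub (hB : IsBrownianMotion P B)
    {s t c : ℝ} (hs : 0 ≤ s) (hst : s ≤ t) (hc : 0 < c) :
    1 - (t - s) / c ^ 2 ≤ P.real {ω | -c < B t ω - B s ω} := by
  have := hB.isProbabilityMeasure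
  have meas : Measurable fun ω => B t ω - B s ω := (hB.1 t).sub (hB.1 s)
  have chebyshev := gaussianReal_real_Iic_neg_le (t - s).toNNReal hc
  rw [Real.coe_toNNReal _ (sub_nonneg.2 hst), ← hB.2.2.1 s t hs hst,
    map_measureReal_apply meas measurableSet_Iic] at chebyshev
  have compl_eq : {ω | -c < B t ω - B s ω} = ((fun ω => B t ω - B s ω) ⁻¹' Iic (-c))ᶜ := by
    ext ω
    simp only [mem_compl_iff, mem_preimage, mem_Iic, not_le, mem_ofPred_eq]
  rw [compl_eq, probReal_compl_eq_one_sub (meas measurableSet_Iic)]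
  exact sub_le_sub_left chebyshev 1

lemma indepFun_sub (hB : IsBrownianMotion P B) {s t : ℝ} (hs : 0 ≤ s) (hst : s ≤ t) :
    IndepFun (B s) (fun ω => B t ω - B s ω) P := by
  let times : ℕ → ℝ
    | 0 => 0
    | 1 => s
    | _ => t
  have times_monotone : Monotone times := monotone_nat_of_le_succ fun
    | 0 => hs
    | 1 => hst
    | _ + 2 => le_rfl
  have increments :=
    (hB.2.2.2 times times_monotone fun i => times_monotone (Nat.zero_le i)).indepFun zero_ne_one
  refine increments.congr ?_ ae_eq_rfl
  filter_upwards [hB.2.1] with ω hω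
  exact (congrArg (B s ω - ·) hω.1).trans (sub_zero _)

lemma measureReal_le_mul_measureReal_lt_sub_le (hB : IsBrownianMotion P B) {s t : ℝ} (hs : 0 ≤ s)
    (hst : s ≤ t) (c d : ℝ) :
    P.real {ω | c ≤ B s ω} * P.real {ω | d - c < B t ω - B s ω}
      ≤ P.real {ω | c ≤ B s ω ∧ d < B t ω} := by
  have := hB.isProbabilityMeasure
  have product := (hB.indepFun_sub hs hst).measure_inter_preimage_eq_mul (Ici c) (Ioi (d - c))
    measurableSet_Ici measurableSet_Ioi
  calc P.real {ω | c ≤ B s ω} * P.real {ω | d - c < B t ω - B s ω}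
      = P.real (B s ⁻¹' Ici c ∩ (fun ω => B t ω - B s ω) ⁻¹' Ioi (d - c)) :=
        ((congrArg ENNReal.toReal product).trans ENNReal.toReal_mul).symm
    _ ≤ P.real {ω | c ≤ B s ω ∧ d < B t ω} := by
        refine measureReal_mono fun ω ⟨hs, hsub⟩ => ⟨hs, ?_⟩
        rw [mem_preimage, mem_Ici] at hs
        rw [mem_preimage, mem_Ioi] at hsub
        linarith

lemma mul_measureReal_exists_monotone_le (hB : IsBrownianMotion P B) {τ : ℕ → ℝ} (hτ : Monotone τ)
    (hτ0 : τ 0 = 0) {n : ℕ} {c : ℕ → ℝ} {d p : ℝ}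
    (hp : ∀ k ≤ n, p ≤ P.real {ω | d - c k ≤ B (τ n) ω - B (τ k) ω}) :
    p * P.real {ω | ∃ k ≤ n, c k ≤ B (τ k) ω} ≤ P.real {ω | d ≤ B (τ n) ω} := by
  have sum_eq : ∀ᵐ ω ∂P, ∀ k, ∑ i ∈ Finset.range k, (B (τ (i + 1)) ω - B (τ i) ω) = B (τ k) ω := by
    filter_upwards [hB.2.1] with ω hω k
    rw [Finset.sum_range_sub (fun i => B (τ i) ω), hτ0, hω.1, sub_zero]
  have tail_eq {k : ℕ} (hk : k ≤ n) :
      {ω | d - c k ≤ ∑ i ∈ Finset.Ico k n, (B (τ (i + 1)) ω - B (τ i) ω)}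
        = {ω | d - c k ≤ B (τ n) ω - B (τ k) ω} := by
    ext ω
    rw [mem_ofPred_eq, Finset.sum_Ico_sub (fun i => B (τ i) ω) hk, mem_ofPred_eq]
  have ottaviani := mul_measureReal_exists_le_sum_le
    (hB.2.2.2 τ hτ fun i => hτ0.ge.trans (hτ i.zero_le))
    (fun i => (hB.1 _).sub (hB.1 _)) (n := n) (c := c) (d := d) (p := p) fun k hk => by
      rw [tail_eq hk]
      exact hp k hk
  refine (congr_arg₂ (p * · ≤ ·) (measureReal_congr ?_) (measureReal_congr ?_)).mp ottaviani
  · filter_upwards [sum_eq] with ω hω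
    exact propext <| exists_congr fun k => and_congr_right fun _ => by rw [hω k]
  · filter_upwards [sum_eq] with ω hω
    exact propext (iff_of_eq (congrArg (d ≤ ·) (hω n)))

lemma mul_measureReal_exists_lt_le (hB : IsBrownianMotion P B) {u : ℝ} (hu : 0 ≤ u)
    {c : ℝ → ℝ} (hc : ContinuousOn c (Icc 0 u)) {d p : ℝ}
    (hp : ∀ s ∈ Icc 0 u, p ≤ P.real {ω | d - c s ≤ B u ω - B s ω}) :
    p * P.real {ω | ∃ s ∈ Icc 0 u, c s < B s ω} ≤ P.real {ω | d ≤ B u ω} := by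
  have := hB.isProbabilityMeasure
  rcases le_or_gt p 0 with hp0 | hp0
  · exact (mul_nonpos_of_nonpos_of_nonneg hp0 measureReal_nonneg).trans measureReal_nonneg
  let grid (m k : ℕ) : ℝ := min ((k : ℝ) / m) 1 * u
  have grid_eq {m k : ℕ} (hk : k ≤ m) : grid m k = k / m * u := by
    have : (k : ℝ) / m ≤ 1 := div_le_one_of_le₀ (Nat.cast_le.2 hk) m.cast_nonneg
    simp only [grid, min_eq_left this]
  have grid_monotone (m : ℕ) : Monotone (grid m) := fun i j hij => by
    simp only [grid]
    gcongr
  have grid_mem (m k : ℕ) : grid m k ∈ Icc 0 u :=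
    ⟨by positivity, mul_le_of_le_one_left hu (min_le_right _ _)⟩
  rw [← le_div_iff₀' hp0]
  refine measureReal_le_of_forall_of_ae_eventually_mem
    (G := fun m => {ω | ∃ k ≤ m + 1, c (grid (m + 1) k) ≤ B (grid (m + 1) k) ω}) (fun m => ?_) ?_
  · have grid_last : grid (m + 1) (m + 1) = u := by
      rw [grid_eq le_rfl, div_self (Nat.cast_ne_zero.2 m.succ_ne_zero), one_mul]
    rw [le_div_iff₀' hp0]
    have := hB.mul_measureReal_exists_monotone_le (grid_monotone (m + 1)) (by simp [grid])
      (n := m + 1) (c := fun k => c (grid (m + 1) k)) (d := d) (p := p)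
    rw [grid_last] at this
    exact this fun k _ => hp _ (grid_mem _ _)
  · filter_upwards [hB.2.1] with ω hω
    rintro ⟨s, hs, hlt⟩
    have cont : ContinuousOn (fun s => B s ω - c s) (Icc 0 u) :=
      (hω.2.mono Icc_subset_Ici_self).sub hc
    have := eventually_exists_grid_pos cont hs (sub_pos.2 hlt)
    filter_upwards [(tendsto_add_atTop_nat 1).eventually this] with m ⟨k, hk, hpos⟩
    refine ⟨k, hk, ?_⟩
    rw [grid_eq hk]
    exact (sub_pos.1 hpos).le

end IsBrownianMotion

section UnstableOU

/-- The variance `∫₀ᵗ e^{-2λs} ds` of the Wiener integral driving `unstableOU`, i.e. the Brownian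
time elapsed at time `t`. -/
noncomputable def clock (lam t : ℝ) : ℝ := (1 - Real.exp (-(2 * lam * t))) / (2 * lam)

variable {lam t : ℝ}

lemma clock_zero : clock lam 0 = 0 := by simp [clock]

lemma clock_monotone (hlam : 0 < lam) : Monotone (clock lam) := fun s t hst => by
  unfold clock
  gcongr

lemma clock_nonneg (hlam : 0 < lam) (ht : 0 ≤ t) : 0 ≤ clock lam t :=
  clock_zero.symm.le.trans (clock_monotone hlam ht)

lemma clock_eq (lam t : ℝ) :
    clock lam t = 1 / (2 * lam) * (1 - Real.exp (-(lam * t)) ^ 2) := by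
  rw [clock, ← Real.exp_nat_mul]
  ring_nf

lemma clock_le (hlam : 0 < lam) (t : ℝ) : clock lam t ≤ 1 / (2 * lam) := by
  rw [clock_eq]
  exact mul_le_of_le_one_right (by positivity) (sub_le_self 1 (sq_nonneg _))

lemma clock_pos (hlam : 0 < lam) (ht : 0 < t) : 0 < clock lam t := by
  refine div_pos (sub_pos.2 (Real.exp_lt_one_iff.2 ?_)) (by positivity)
  exact neg_neg_of_pos (by positivity)

lemma sqrt_one_sub_clock (hlam : lam ≠ 0) :
    √(1 - 2 * lam * clock lam t) = Real.exp (-(lam * t)) := by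
  have : 1 - 2 * lam * clock lam t = Real.exp (-(lam * t)) ^ 2 := by
    rw [clock_eq]
    field_simp
    ring
  rw [this, Real.sqrt_sq (Real.exp_pos _).le]

lemma continuous_clock : Continuous (clock lam) := by
  unfold clock
  fun_prop

lemma image_clock_Icc (hlam : 0 < lam) (ht : 0 ≤ t) :
    clock lam '' Icc 0 t = Icc 0 (clock lam t) := by
  rw [continuous_clock.continuousOn.image_Icc_of_monotoneOn ht
    ((clock_monotone hlam).monotoneOn _), clock_zero]

lemma tendsto_exp_neg_mul_atTop (hlam : 0 < lam) :
    Tendsto (fun t => Real.exp (-(lam * t))) atTop (𝓝 0) :=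
  Real.tendsto_exp_neg_atTop_nhds_zero.comp (tendsto_id.const_mul_atTop hlam)

lemma tendsto_clock (hlam : 0 < lam) : Tendsto (clock lam) atTop (𝓝 (1 / (2 * lam))) := by
  simpa only [← clock_eq, zero_pow two_ne_zero, sub_zero, mul_one] using
    (((tendsto_exp_neg_mul_atTop hlam).pow 2).const_sub 1).const_mul (1 / (2 * lam))

variable {Ω : Type*} {B : ℝ → Ω → ℝ} {x₀ ε : ℝ} {ω : Ω}

/-- The solution of `dX = λ X dt + ε dW`, `X(0) = x₀`, in terms of the Brownian motion `B` whose
value at time `clock lam t` is the Wiener integral `∫₀ᵗ e^{-λs} dW(s)`. -/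
noncomputable def unstableOU (B : ℝ → Ω → ℝ) (lam x₀ ε t : ℝ) (ω : Ω) : ℝ :=
  Real.exp (lam * t) * (x₀ + ε * B (clock lam t) ω)

/-- The event `F_ε` that `unstableOU` diverges to `+∞`: since `clock lam t` tends to `1 / (2λ)`,
the rescaled process `e^{-λt} X_ε(t)` has a positive limit. -/
def escapeRight (B : ℝ → Ω → ℝ) (lam x₀ ε : ℝ) : Set Ω := {ω | 0 < x₀ + ε * B (1 / (2 * lam)) ω}

lemma mem_escapeRight_iff (hε : 0 < ε) :
    ω ∈ escapeRight B lam x₀ ε ↔ -x₀ / ε < B (1 / (2 * lam)) ω := by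
  rw [div_lt_iff₀' hε, neg_lt_iff_pos_add']
  rfl

lemma le_unstableOU_iff (hε : 0 < ε) (q : ℝ) :
    q ≤ unstableOU B lam x₀ ε t ω ↔
      (-x₀ + q * Real.exp (-(lam * t))) / ε ≤ B (clock lam t) ω := by
  rw [unstableOU, div_le_iff₀' hε, neg_add_le_iff_le_add, Real.exp_neg, ← div_eq_mul_inv,
    div_le_iff₀' (Real.exp_pos _)]

lemma lt_unstableOU_iff (hε : 0 < ε) (q : ℝ) :
    q < unstableOU B lam x₀ ε t ω ↔
      (-x₀ + q * Real.exp (-(lam * t))) / ε < B (clock lam t) ω := by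
  rw [unstableOU, div_lt_iff₀' hε, neg_add_lt_iff_lt_add, Real.exp_neg, ← div_eq_mul_inv,
    div_lt_iff₀' (Real.exp_pos _)]

lemma unstableOU_zero (hB0 : B 0 ω = 0) : unstableOU B lam x₀ ε 0 ω = x₀ := by
  rw [unstableOU, clock_zero, hB0, mul_zero, mul_zero, add_zero, Real.exp_zero, one_mul]

lemma continuousOn_unstableOU (hlam : 0 < lam) (hB : ContinuousOn (fun s => B s ω) (Ici 0)) :
    ContinuousOn (fun t => unstableOU B lam x₀ ε t ω) (Ici 0) := by
  have : ContinuousOn (fun t => B (clock lam t) ω) (Ici 0) :=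
    hB.comp continuous_clock.continuousOn fun t ht => clock_nonneg hlam ht
  have exp_cont : Continuous fun t => Real.exp (lam * t) := by fun_prop
  exact exp_cont.continuousOn.mul (continuousOn_const.add (continuousOn_const.mul this))

lemma tendsto_unstableOU_atTop (hlam : 0 < lam) (hB : ContinuousOn (fun s => B s ω) (Ici 0))
    (hω : ω ∈ escapeRight B lam x₀ ε) :
    Tendsto (fun t => unstableOU B lam x₀ ε t ω) atTop atTop := by
  have clock_tendsto : Tendsto (clock lam) atTop (𝓝[Ici 0] (1 / (2 * lam))) :=
    tendsto_nhdsWithin_iff.2 ⟨tendsto_clock hlam,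
      (eventually_ge_atTop 0).mono fun t ht => clock_nonneg hlam ht⟩
  have terminal_nonneg : (0 : ℝ) ≤ 1 / (2 * lam) := by positivity
  exact (Real.tendsto_exp_atTop.comp (tendsto_id.const_mul_atTop hlam)).atTop_mul_pos hω
    ((((hB _ terminal_nonneg).tendsto.comp clock_tendsto).const_mul ε).const_add x₀)

lemma exp_neg_mul_add_log (hlam : lam ≠ 0) (hε : 0 < ε) (y : ℝ) :
    Real.exp (-(lam * (y + 2 / lam * Real.log (1 / ε)))) = Real.exp (-(lam * y)) * ε ^ 2 := by
  have : -(lam * (y + 2 / lam * Real.log (1 / ε))) = -(lam * y) + (2 : ℕ) * Real.log ε := by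
    rw [one_div, Real.log_inv]
    field_simp
    push_cast
    ring
  rw [this, Real.exp_add, Real.exp_nat_mul, Real.exp_log hε]

end UnstableOU

-- The levels differ by `O(e / ε)` only, because `1 - √(1 - e²) = e² / (1 + √(1 - e²))`.
lemma tendsto_mul_level_sub_level {ι : Type*} {l : Filter ι} {ε e q : ι → ℝ} {a q₀ κ v : ℝ}
    (hv : 0 < v) (hε : Tendsto ε l (𝓝[≠] 0)) (he : Tendsto (fun i => e i / ε i ^ 2) l (𝓝 κ))
    (hq : Tendsto q l (𝓝 q₀)) :
    Tendsto (fun i => (a / ε i / √v) *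
        ((a + q i * e i) / ε i / √(v * (1 - e i ^ 2)) - a / ε i / √v))
      l (𝓝 (a * q₀ * κ / v)) := by
  obtain ⟨ε_tendsto, ε_ne⟩ := tendsto_nhdsWithin_iff.1 hε
  have e_tendsto : Tendsto e l (𝓝 0) := by
    have := he.mul (ε_tendsto.pow 2)
    rw [zero_pow two_ne_zero, mul_zero] at this
    exact this.congr' (ε_ne.mono fun i hi => div_mul_cancel₀ _ (pow_ne_zero 2 hi))
  have root_tendsto : Tendsto (fun i => √(1 - e i ^ 2)) l (𝓝 1) := by
    simpa using ((e_tendsto.pow 2).const_sub 1).sqrt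
  have limit := (((he.const_mul a).mul (((e_tendsto.const_mul a).div
    (root_tendsto.mul (root_tendsto.const_add 1)) (by norm_num)).add
      (hq.div root_tendsto one_ne_zero))).div_const v)
  simp only [mul_zero, zero_div, zero_add, div_one, mul_right_comm a κ q₀] at limit
  refine limit.congr' ?_
  filter_upwards [ε_ne, root_tendsto.eventually_const_lt zero_lt_one] with i hεi hpos
  have root_sq : √(1 - e i ^ 2) ^ 2 = 1 - e i ^ 2 := Real.sq_sqrt (Real.sqrt_pos.1 hpos).le
  have v_eq : v = √v ^ 2 := (Real.sq_sqrt hv.le).symm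
  have sqrt_v_pos : 0 < √v := Real.sqrt_pos.2 hv
  have hεi : ε i ≠ 0 := hεi
  simp only [Pi.div_apply]
  rw [Real.sqrt_mul hv.le]
  generalize √(1 - e i ^ 2) = h at *
  have : 1 + h ≠ 0 := by positivity
  rw [v_eq, Real.sqrt_sq sqrt_v_pos.le]
  field_simp
  linear_combination a ^ 2 * root_sq

lemma measureReal_cond {Ω : Type*} [MeasurableSpace Ω] {P : Measure Ω} {F : Set Ω}
    (hF : MeasurableSet F) (A : Set Ω) : (P[|F]).real A = P.real (F ∩ A) / P.real F := by
  rw [Measure.real, cond_apply hF, ENNReal.toReal_mul, ENNReal.toReal_inv, div_eq_inv_mul]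
  rfl

namespace IsBrownianMotion

variable {Ω : Type*} [MeasurableSpace Ω] {P : Measure Ω} {B : ℝ → Ω → ℝ} {lam x₀ ε q t : ℝ}

lemma measurable_unstableOU (hB : IsBrownianMotion P B) : Measurable (unstableOU B lam x₀ ε t) :=
  (((hB.1 _).const_mul ε).const_add x₀).const_mul _

lemma measurableSet_escapeRight (hB : IsBrownianMotion P B) :
    MeasurableSet (escapeRight B lam x₀ ε) :=
  measurableSet_lt measurable_const (((hB.1 _).const_mul ε).const_add x₀)

lemma measureReal_escapeRight (hB : IsBrownianMotion P B) (hlam : 0 < lam) (hε : 0 < ε) :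
    P.real (escapeRight B lam x₀ ε)
      = (gaussianReal 0 1).real (Ici (-x₀ / ε / √(1 / (2 * lam)))) := by
  rw [← hB.measureReal_lt (by positivity)]
  congr 1
  ext ω
  exact mem_escapeRight_iff hε

lemma measureReal_escapeRight_pos (hB : IsBrownianMotion P B) (hlam : 0 < lam) (hε : 0 < ε) :
    0 < P.real (escapeRight B lam x₀ ε) := by
  rw [hB.measureReal_escapeRight hlam hε]
  exact gaussianReal_real_Ici_pos _

lemma isProbabilityMeasure_cond_escapeRight (hB : IsBrownianMotion P B) (hlam : 0 < lam)
    (hε : 0 < ε) : IsProbabilityMeasure (P[|escapeRight B lam x₀ ε]) := by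
  have := hB.isProbabilityMeasure
  exact cond_isProbabilityMeasure
    ((measureReal_ne_zero_iff).1 (hB.measureReal_escapeRight_pos hlam hε).ne')

lemma measureReal_le_unstableOU (hB : IsBrownianMotion P B) (hlam : 0 < lam) (hε : 0 < ε)
    (ht : 0 < t) (q : ℝ) :
    P.real {ω | q ≤ unstableOU B lam x₀ ε t ω}
      = (gaussianReal 0 1).real (Ici ((-x₀ + q * Real.exp (-(lam * t))) / ε / √(clock lam t))) := by
  simp only [le_unstableOU_iff hε, hB.measureReal_le (clock_pos hlam ht)]

lemma tendsto_measureReal_le_unstableOU_div (hB : IsBrownianMotion P B) {κ : ℝ} (hlam : 0 < lam)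
    (hx₀ : x₀ < 0) {t c : ℝ → ℝ} (hc : Tendsto c (𝓝[>] 0) (𝓝 q)) (ht : ∀ᶠ ε in 𝓝[>] 0, 0 < t ε)
    (hκ : Tendsto (fun ε => Real.exp (-(lam * t ε)) / ε ^ 2) (𝓝[>] 0) (𝓝 κ)) :
    Tendsto (fun ε => P.real {ω | c ε ≤ unstableOU B lam x₀ ε (t ε) ω} /
        P.real (escapeRight B lam x₀ ε)) (𝓝[>] 0)
      (𝓝 (Real.exp (-(2 * lam * q * |x₀| * κ)))) := by
  have hT : (0 : ℝ) < 1 / (2 * lam) := by positivity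
  have level_tendsto : Tendsto (fun ε : ℝ => -x₀ / ε / √(1 / (2 * lam))) (𝓝[>] 0) atTop :=
    (tendsto_inv_nhdsGT_zero.const_mul_atTop (neg_pos.2 hx₀)).atTop_div_const (Real.sqrt_pos.2 hT)
  have ε_tendsto : Tendsto (fun ε : ℝ => ε) (𝓝[>] 0) (𝓝[≠] 0) := nhdsGT_le_nhdsNE 0
  have limit_eq : -x₀ * q * κ / (1 / (2 * lam)) = 2 * lam * q * |x₀| * κ := by
    rw [abs_of_neg hx₀]
    field_simp
  have ratio := tendsto_gaussianReal_real_Ici_div level_tendsto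
    (tendsto_mul_level_sub_level hT ε_tendsto hκ hc)
  rw [limit_eq] at ratio
  refine ratio.congr' ?_
  filter_upwards [self_mem_nhdsWithin, ht] with ε hε htε
  rw [hB.measureReal_le_unstableOU hlam hε htε, hB.measureReal_escapeRight hlam hε, clock_eq]

-- After time `s` the remaining fluctuation of `B` is of order `√(1 / (2λ) - s)`; the gap between
-- the two barriers is at least of this order divided by `ε`, uniformly in `s`.
lemma one_sub_le_measureReal_barrier_sub_le (hB : IsBrownianMotion P B) {q' s : ℝ} (hlam : 0 < lam)
    (hε : 0 < ε) (hq' : 0 ≤ q') (hqq' : q' < q) (hs : s ∈ Icc 0 (clock lam t)) :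
    1 - ε ^ 2 / (2 * lam * (q - q') ^ 2) ≤
      P.real {ω | (-x₀ + q' * Real.exp (-(lam * t))) / ε - (-x₀ + q * √(1 - 2 * lam * s)) / ε ≤
        B (clock lam t) ω - B s ω} := by
  have := hB.isProbabilityMeasure
  have gap_pos : 0 < q - q' := sub_pos.2 hqq'
  have exp_le : Real.exp (-(lam * t)) ≤ √(1 - 2 * lam * s) := by
    rw [← sqrt_one_sub_clock hlam.ne']
    gcongr
    exact hs.2
  have root_pos : 0 < √(1 - 2 * lam * s) := (Real.exp_pos _).trans_le exp_le
  have root_sq := Real.sq_sqrt (Real.sqrt_pos.1 root_pos).le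
  have remaining_le : clock lam t - s ≤ √(1 - 2 * lam * s) ^ 2 / (2 * lam) := by
    rw [root_sq, sub_div, mul_div_cancel_left₀ _ (by positivity)]
    exact sub_le_sub_right (clock_le hlam t) s
  have level_sub_barrier_le :
      (-x₀ + q' * Real.exp (-(lam * t))) / ε - (-x₀ + q * √(1 - 2 * lam * s)) / ε
        ≤ -((q - q') * √(1 - 2 * lam * s) / ε) := by
    rw [← sub_div, ← neg_div]
    gcongr
    linarith [mul_le_mul_of_nonneg_left exp_le hq']
  calc 1 - ε ^ 2 / (2 * lam * (q - q') ^ 2)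
      = 1 - √(1 - 2 * lam * s) ^ 2 / (2 * lam) / ((q - q') * √(1 - 2 * lam * s) / ε) ^ 2 := by
        field_simp
    _ ≤ 1 - (clock lam t - s) / ((q - q') * √(1 - 2 * lam * s) / ε) ^ 2 := by gcongr
    _ ≤ P.real {ω | -((q - q') * √(1 - 2 * lam * s) / ε) < B (clock lam t) ω - B s ω} :=
        hB.one_sub_div_sq_le_measureReal_neg_lt_sub hs.1 hs.2 (by positivity)
    _ ≤ _ := measureReal_mono fun ω hω => level_sub_barrier_le.trans (le_of_lt hω)

lemma mul_measureReal_exists_lt_unstableOU_le (hB : IsBrownianMotion P B) {q' : ℝ} (hlam : 0 < lam)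
    (hε : 0 < ε) (hq' : 0 ≤ q') (hqq' : q' < q) (ht : 0 ≤ t) :
    (1 - ε ^ 2 / (2 * lam * (q - q') ^ 2)) *
        P.real {ω | ∃ r ∈ Icc 0 t, q < unstableOU B lam x₀ ε r ω}
      ≤ P.real {ω | q' ≤ unstableOU B lam x₀ ε t ω} := by
  have barrier_cont : Continuous fun s => (-x₀ + q * √(1 - 2 * lam * s)) / ε := by fun_prop
  have maximal := hB.mul_measureReal_exists_lt_le (clock_nonneg hlam ht) barrier_cont.continuousOn
    fun s hs => hB.one_sub_le_measureReal_barrier_sub_le hlam hε hq' hqq' hs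
  have passage_iff (ω : Ω) : (∃ r ∈ Icc 0 t, q < unstableOU B lam x₀ ε r ω) ↔
      ∃ s ∈ Icc 0 (clock lam t), (-x₀ + q * √(1 - 2 * lam * s)) / ε < B s ω := by
    rw [← image_clock_Icc hlam ht, exists_mem_image]
    simp only [sqrt_one_sub_clock hlam.ne', lt_unstableOU_iff hε]
  simpa only [passage_iff, le_unstableOU_iff hε] using maximal

lemma mul_measureReal_le_unstableOU_le (hB : IsBrownianMotion P B) (hlam : 0 < lam) (hε : 0 < ε)
    (hq : 0 < q) (ht : 0 ≤ t) :
    (1 - ε ^ 2 / (2 * lam * q ^ 2)) * P.real {ω | q ≤ unstableOU B lam x₀ ε t ω}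
      ≤ P.real (escapeRight B lam x₀ ε ∩ {ω | q ≤ unstableOU B lam x₀ ε t ω}) := by
  have chebyshev := hB.one_sub_div_sq_le_measureReal_neg_lt_sub (clock_nonneg hlam ht)
    (clock_le hlam t) (c := q * Real.exp (-(lam * t)) / ε) (by positivity)
  have variance_div : (1 / (2 * lam) - clock lam t) / (q * Real.exp (-(lam * t)) / ε) ^ 2
      = ε ^ 2 / (2 * lam * q ^ 2) := by
    rw [clock_eq]
    field_simp
    ring
  have gap_eq : -x₀ / ε - (-x₀ + q * Real.exp (-(lam * t))) / ε
      = -(q * Real.exp (-(lam * t)) / ε) := by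
    ring
  have inter_eq : escapeRight B lam x₀ ε ∩ {ω | q ≤ unstableOU B lam x₀ ε t ω}
      = {ω | (-x₀ + q * Real.exp (-(lam * t))) / ε ≤ B (clock lam t) ω ∧
          -x₀ / ε < B (1 / (2 * lam)) ω} := by
    ext ω
    rw [mem_inter_iff, mem_escapeRight_iff hε, and_comm]
    exact and_congr_left' (le_unstableOU_iff hε q)
  have product := hB.measureReal_le_mul_measureReal_lt_sub_le (clock_nonneg hlam ht)
    (clock_le hlam t) ((-x₀ + q * Real.exp (-(lam * t))) / ε) (-x₀ / ε)
  rw [variance_div] at chebyshev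
  rw [gap_eq] at product
  rw [inter_eq, mul_comm]
  simp only [le_unstableOU_iff hε]
  exact (mul_le_mul_of_nonneg_left chebyshev measureReal_nonneg).trans product

lemma measureReal_cond_exists_le_unstableOU_ge (hB : IsBrownianMotion P B) (hlam : 0 < lam)
    (hε : 0 < ε) (hq : 0 < q) (ht : 0 ≤ t) :
    (1 - ε ^ 2 / (2 * lam * q ^ 2)) * (P.real {ω | q ≤ unstableOU B lam x₀ ε t ω} /
        P.real (escapeRight B lam x₀ ε))
      ≤ (P[|escapeRight B lam x₀ ε]).real {ω | ∃ r ∈ Icc 0 t, q ≤ unstableOU B lam x₀ ε r ω} := by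
  have := hB.isProbabilityMeasure
  rw [measureReal_cond hB.measurableSet_escapeRight, ← mul_div_assoc]
  gcongr
  exact (hB.mul_measureReal_le_unstableOU_le hlam hε hq ht).trans <|
    measureReal_mono <| inter_subset_inter_right _ fun ω hω => ⟨t, right_mem_Icc.2 ht, hω⟩

lemma mul_measureReal_cond_exists_le_unstableOU_le (hB : IsBrownianMotion P B) {δ : ℝ}
    (hlam : 0 < lam) (hε : 0 < ε) (hδ : 0 < δ) (hδq : 2 * δ ≤ q) (ht : 0 ≤ t)
    (hεδ : ε ^ 2 / (2 * lam * δ ^ 2) ≤ 1) :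
    (1 - ε ^ 2 / (2 * lam * δ ^ 2)) *
        (P[|escapeRight B lam x₀ ε]).real {ω | ∃ r ∈ Icc 0 t, q ≤ unstableOU B lam x₀ ε r ω}
      ≤ P.real {ω | q - 2 * δ ≤ unstableOU B lam x₀ ε t ω} / P.real (escapeRight B lam x₀ ε) := by
  have := hB.isProbabilityMeasure
  have maximal := hB.mul_measureReal_exists_lt_unstableOU_le (x₀ := x₀) (q := q - δ)
    (q' := q - 2 * δ) hlam hε (sub_nonneg.2 hδq) (by linarith) ht
  rw [(by ring : q - δ - (q - 2 * δ) = δ)] at maximal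
  rw [measureReal_cond hB.measurableSet_escapeRight, ← mul_div_assoc]
  gcongr
  refine le_trans ?_ maximal
  refine mul_le_mul_of_nonneg_left (measureReal_mono ?_) (sub_nonneg.2 hεδ)
  rintro ω ⟨-, r, hr, hq⟩
  exact ⟨r, hr, (sub_lt_self q hδ).trans_le hq⟩

lemma tendsto_measureReal_cond_exists_le_unstableOU (hB : IsBrownianMotion P B) {κ : ℝ}
    (hlam : 0 < lam) (hx₀ : x₀ < 0) (hq : 0 < q) {t : ℝ → ℝ} (ht : ∀ᶠ ε in 𝓝[>] 0, 0 < t ε)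
    (hκ : Tendsto (fun ε => Real.exp (-(lam * t ε)) / ε ^ 2) (𝓝[>] 0) (𝓝 κ)) :
    Tendsto (fun ε => (P[|escapeRight B lam x₀ ε]).real
        {ω | ∃ r ∈ Icc 0 (t ε), q ≤ unstableOU B lam x₀ ε r ω}) (𝓝[>] 0)
      (𝓝 (Real.exp (-(2 * lam * q * |x₀| * κ)))) := by
  have ε_tendsto : Tendsto (fun ε : ℝ => ε) (𝓝[>] 0) (𝓝 0) := nhdsWithin_le_nhds
  have sqrt_tendsto : Tendsto (fun ε : ℝ => √ε) (𝓝[>] 0) (𝓝 0) := by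
    simpa using ε_tendsto.sqrt
  have level_tendsto : Tendsto (fun ε : ℝ => q - 2 * √ε) (𝓝[>] 0) (𝓝 q) := by
    simpa using (sqrt_tendsto.const_mul 2).const_sub q
  have lower_factor : Tendsto (fun ε : ℝ => 1 - ε ^ 2 / (2 * lam * q ^ 2)) (𝓝[>] 0) (𝓝 1) := by
    simpa using ((ε_tendsto.pow 2).div_const (2 * lam * q ^ 2)).const_sub 1
  have upper_factor : Tendsto (fun ε : ℝ => 1 - ε ^ 2 / (2 * lam * √ε ^ 2)) (𝓝[>] 0) (𝓝 1) := by
    have : Tendsto (fun ε : ℝ => 1 - ε / (2 * lam)) (𝓝[>] 0) (𝓝 1) := by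
      simpa using (ε_tendsto.div_const (2 * lam)).const_sub 1
    refine this.congr' ?_
    filter_upwards [self_mem_nhdsWithin] with ε hε
    rw [Real.sq_sqrt (le_of_lt hε), sq, mul_div_mul_right _ _ (ne_of_gt hε)]
  have lower := lower_factor.mul
    (hB.tendsto_measureReal_le_unstableOU_div hlam hx₀ (tendsto_const_nhds (x := q)) ht hκ)
  have upper := (hB.tendsto_measureReal_le_unstableOU_div hlam hx₀ level_tendsto ht hκ).div
    upper_factor one_ne_zero
  rw [one_mul] at lower
  rw [div_one] at upper
  refine tendsto_of_tendsto_of_tendsto_of_le_of_le' lower upper ?_ ?_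
  · filter_upwards [self_mem_nhdsWithin, ht] with ε hε htε
    exact hB.measureReal_cond_exists_le_unstableOU_ge hlam hε hq htε.le
  · filter_upwards [self_mem_nhdsWithin, ht, upper_factor.eventually_const_lt zero_lt_one,
      level_tendsto.eventually_const_lt hq] with ε hε htε hfactor hlevel
    refine (le_div_iff₀' hfactor).2 ?_
    exact hB.mul_measureReal_cond_exists_le_unstableOU_le hlam hε (Real.sqrt_pos.2 hε)
      (sub_pos.1 hlevel).le htε.le (sub_pos.1 hfactor).le

lemma ae_cond_levelHittingTime_le_iff (hB : IsBrownianMotion P B) (hlam : 0 < lam) (hq : x₀ ≤ q) :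
    ∀ᵐ ω ∂(P[|escapeRight B lam x₀ ε]), ∀ t,
      levelHittingTime (fun r => unstableOU B lam x₀ ε r ω) q ≤ t ↔
        ∃ r ∈ Icc 0 t, q ≤ unstableOU B lam x₀ ε r ω := by
  filter_upwards [cond_absolutelyContinuous.ae_le hB.2.1,
    ae_cond_mem hB.measurableSet_escapeRight] with ω ⟨hB0, hBcont⟩ hω t
  refine levelHittingTime_le_iff (continuousOn_unstableOU hlam hBcont)
    ((unstableOU_zero hB0).trans_le hq) ?_
  exact ((eventually_ge_atTop 0).and
    ((tendsto_unstableOU_atTop hlam hBcont hω).eventually_ge_atTop q)).exists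

lemma aemeasurable_levelHittingTime (hB : IsBrownianMotion P B) (hlam : 0 < lam) (hq : x₀ ≤ q) :
    AEMeasurable (fun ω => levelHittingTime (fun r => unstableOU B lam x₀ ε r ω) q)
      (P[|escapeRight B lam x₀ ε]) := by
  have passage (t : ℝ) : NullMeasurableSet
      {ω | ∃ r ∈ Icc 0 t, q ≤ unstableOU B lam x₀ ε r ω} (P[|escapeRight B lam x₀ ε]) := by
    refine nullMeasurableSet_exists_le isCompact_Icc (fun r _ => hB.measurable_unstableOU) ?_ q
    filter_upwards [cond_absolutelyContinuous.ae_le hB.2.1] with ω hω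
    exact (continuousOn_unstableOU hlam hω.2).mono Icc_subset_Ici_self
  have null_measurable : NullMeasurable
      (fun ω => levelHittingTime (fun r => unstableOU B lam x₀ ε r ω) q)
      (P[|escapeRight B lam x₀ ε]) := by
    refine measurable_of_Iic
      (δ := NullMeasurableSpace Ω (P[|escapeRight B lam x₀ ε])) fun t => (passage t).congr ?_
    filter_upwards [hB.ae_cond_levelHittingTime_le_iff hlam hq] with ω hω
    exact propext (hω t).symm
  exact null_measurable.aemeasurable

lemma tendsto_measureReal_cond_levelHittingTime_le (hB : IsBrownianMotion P B) (hlam : 0 < lam)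
    (hx₀ : x₀ < 0) (hq : 0 < q) (y : ℝ) :
    Tendsto (fun ε => (P[|escapeRight B lam x₀ ε]).real
        {ω | levelHittingTime (fun r => unstableOU B lam x₀ ε r ω) q
          - 2 / lam * Real.log (1 / ε) ≤ y}) (𝓝[>] 0)
      (𝓝 (Real.exp (-(2 * lam * q * |x₀| * Real.exp (-(lam * y)))))) := by
  have t_tendsto : Tendsto (fun ε => y + 2 / lam * Real.log (1 / ε)) (𝓝[>] 0) atTop := by
    refine tendsto_atTop_add_const_left _ _ ((Real.tendsto_log_atTop.comp ?_).const_mul_atTop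
      (by positivity))
    exact tendsto_inv_nhdsGT_zero.congr fun ε => (one_div ε).symm
  have scale : Tendsto
      (fun ε => Real.exp (-(lam * (y + 2 / lam * Real.log (1 / ε)))) / ε ^ 2) (𝓝[>] 0)
      (𝓝 (Real.exp (-(lam * y)))) := by
    refine tendsto_const_nhds.congr' ?_
    filter_upwards [self_mem_nhdsWithin] with ε hε
    rw [exp_neg_mul_add_log hlam.ne' hε, mul_div_cancel_right₀ _ (pow_ne_zero 2 (ne_of_gt hε))]
  refine (hB.tendsto_measureReal_cond_exists_le_unstableOU hlam hx₀ hq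
    (t_tendsto.eventually_gt_atTop 0) scale).congr fun ε => measureReal_congr ?_
  filter_upwards [hB.ae_cond_levelHittingTime_le_iff hlam (hx₀.trans hq).le] with ω hω
  exact propext ((hω _).symm.trans sub_le_iff_le_add.symm)

end IsBrownianMotion

lemma measureReal_affine_gumbel_le {Ω : Type*} [MeasurableSpace Ω] {P : Measure Ω} {Z : Ω → ℝ}
    (hZ : ∀ x, P.real {ω | Z ω ≤ x} = Real.exp (-Real.exp (-x))) {lam a : ℝ} (hlam : 0 < lam)
    (ha : 0 < a) (y : ℝ) :
    P.real {ω | 1 / lam * Real.log a + 1 / lam * Z ω ≤ y}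
      = Real.exp (-(a * Real.exp (-(lam * y)))) := by
  have le_iff (z : ℝ) : 1 / lam * Real.log a + 1 / lam * z ≤ y ↔ z ≤ lam * y - Real.log a := by
    rw [← mul_add, one_div, inv_mul_le_iff₀ hlam, le_sub_iff_add_le']
  simp only [le_iff]
  exact (hZ _).trans (by rw [neg_sub, sub_eq_add_neg, Real.exp_add, Real.exp_log ha])

theorem gumbel_limit_conditioned_on_F_general
    {Ω : Type*} [MeasurableSpace Ω] (P : Measure Ω)
    (B : ℝ → Ω → ℝ) (hB : IsBrownianMotion P B)
    (lam x₀ qp : ℝ) (hlam : 0 < lam) (hx₀ : x₀ < 0) (hqp : 0 < qp)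
    (X : ℝ → ℝ → Ω → ℝ)
    (hX : ∀ ε t ω, X ε t ω
      = Real.exp (lam * t) * (x₀ + ε * B ((1 - Real.exp (-(2 * lam * t))) / (2 * lam)) ω))
    (θ : ℝ → Ω → ℝ)
    (hθ : ∀ ε ω, θ ε ω = sInf {t | 0 ≤ t ∧ X ε t ω = qp})
    (F : ℝ → Set Ω)
    (hF : ∀ ε, F ε = {ω | 0 < x₀ + ε * B (1 / (2 * lam)) ω})
    {Ω' : Type*} [MeasurableSpace Ω'] (P' : Measure Ω') [IsProbabilityMeasure P']
    (Z : Ω' → ℝ) (hZmeas : AEMeasurable Z P')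
    (hZ : ∀ x : ℝ, (P' {ω' | Z ω' ≤ x}).toReal = Real.exp (-Real.exp (-x))) :
    ∀ f : BoundedContinuousFunction ℝ ℝ,
      Tendsto
        (fun ε : ℝ => ∫ ω, f (θ ε ω - (2 / lam) * Real.log (1 / ε)) ∂(P[|F ε]))
        (𝓝[>] 0)
        (𝓝 (∫ ω', f ((1 / lam) * Real.log (2 * lam * qp * |x₀|) + (1 / lam) * Z ω') ∂P')) := by
  intro f
  obtain rfl : X = unstableOU B lam x₀ := funext₃ hX
  obtain rfl : θ = fun ε ω => levelHittingTime (fun t => unstableOU B lam x₀ ε t ω) qp := funext₂ hθ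
  obtain rfl : F = escapeRight B lam x₀ := funext hF
  have range_mem : range ((↑) : Ioi (0 : ℝ) → ℝ) ∈ 𝓝[>] 0 := by
    rw [Subtype.range_coe]
    exact self_mem_nhdsWithin
  have (ε : Ioi (0 : ℝ)) : IsProbabilityMeasure (P[|escapeRight B lam x₀ ε]) :=
    hB.isProbabilityMeasure_cond_escapeRight hlam ε.2
  have scale_pos : 0 < 2 * lam * qp * |x₀| := by
    have := abs_pos.2 hx₀.ne
    positivity
  refine (tendsto_comap'_iff range_mem).1 (tendsto_integral_of_tendstoInDistribution
    (tendstoInDistribution_of_tendsto_measureReal_le (fun ε => ?_) ?_ fun y _ => ?_) f)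
  · exact (hB.aemeasurable_levelHittingTime hlam (hx₀.trans hqp).le).sub_const _
  · exact (hZmeas.const_mul _).const_add _
  · rw [measureReal_affine_gumbel_le hZ hlam scale_pos]
    exact (tendsto_comap'_iff range_mem).2
      (hB.tendsto_measureReal_cond_levelHittingTime_le hlam hx₀ hqp y)

/-- With `F_ε = {x₀ + ε B(1/(2λ)) > 0}` and `θ_ε = inf{t ≥ 0 : X_ε(t) = q₊}`, the
conditional law `Law[θ_ε - (2/λ) ln(1/ε) | F_ε]` converges weakly, as `ε → 0⁺`, to the law
of `(1/λ) ln(2 λ q₊ |x₀|) + (1/λ) Z` with `Z` standard Gumbel. -/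
theorem gumbel_limit_conditioned_on_F
    {Ω : Type*} [MeasurableSpace Ω] (P : Measure Ω) [IsProbabilityMeasure P]
    (hPc : P.IsComplete)
    (B : ℝ → Ω → ℝ) (hB : IsBrownianMotion P B)
    (lam qm x₀ qp : ℝ) (hlam : 0 < lam) (hqm : qm < x₀) (hx₀ : x₀ < 0) (hqp : 0 < qp)
    (X : ℝ → ℝ → Ω → ℝ)
    (hX : ∀ ε t ω, X ε t ω
      = Real.exp (lam * t) * (x₀ + ε * B ((1 - Real.exp (-(2 * lam * t))) / (2 * lam)) ω))
    (θ : ℝ → Ω → ℝ)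
    (hθ : ∀ ε ω, θ ε ω = sInf {t | 0 ≤ t ∧ X ε t ω = qp})
    (F : ℝ → Set Ω)
    (hF : ∀ ε, F ε = {ω | 0 < x₀ + ε * B (1 / (2 * lam)) ω})
    -- `Z` is a standard Gumbel random variable on an auxiliary probability space
    {Ω' : Type*} [MeasurableSpace Ω'] (P' : Measure Ω') [IsProbabilityMeasure P']
    (Z : Ω' → ℝ) (hZmeas : Measurable Z)
    (hZ : ∀ x : ℝ, (P' {ω' | Z ω' ≤ x}).toReal = Real.exp (-Real.exp (-x))) :
    ∀ f : BoundedContinuousFunction ℝ ℝ,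
      Tendsto
        (fun ε : ℝ => ∫ ω, f (θ ε ω - (2 / lam) * Real.log (1 / ε)) ∂(P[|F ε]))
        (𝓝[>] 0)
        (𝓝 (∫ ω', f ((1 / lam) * Real.log (2 * lam * qp * |x₀|) + (1 / lam) * Z ω') ∂P')) :=
  gumbel_limit_conditioned_on_F_general P B hB lam x₀ qp hlam hx₀ hqp X hX θ hθ F hF P' Z
    hZmeas.aemeasurable hZ
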